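/- arXiv:1503.00345 — 2 statements merged into one kernel-verified Lean document; each statement's English description precedes it below -/
import Mathlib

section
/- Let X be a nonnegative random variable with E[X] < ∞. Set V_X := Var(√X), m_X := essInf X, and E_X := E[(√X − √m_X)²]. Then either E_X = V_X = 0, or E_X > V_X > 0. (This is the necessity part of Proposition 1 for the pair (V_X, E_X).) -/
open MeasureTheory ProbabilityTheory Real
open Filter

/-! The mean square deviation of `Y = √X` from a constant `c` is `Var Y + (E Y - c) ^ 2`. For
`c = essInf Y` the second term vanishes only if `Y` is almost surely constant, that is, only if the
first one does. Since the square root is monotone and continuous, `essInf √X = √(essInf X)`. -/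

lemma isCoboundedUnder_ge_of_countableInterFilter {α R : Type*} [LinearOrder R]
    [(atTop : Filter R).IsCountablyGenerated] (l : Filter α) [l.NeBot] [CountableInterFilter l]
    (f : α → R) : IsCoboundedUnder (· ≥ ·) l f := by
  have : Nonempty R := l.nonempty_of_neBot.map f
  obtain ⟨x, hx⟩ := exists_seq_tendsto (atTop : Filter R)
  obtain ⟨n, hn⟩ : ∃ n, ∃ᶠ a in l, f a ≤ x n := by
    by_contra! h
    obtain ⟨a, ha⟩ := (eventually_countable_forall.2 h).exists
    obtain ⟨n, hn⟩ := (hx.eventually_ge_atTop (f a)).exists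
    exact (ha n).not_ge hn
  exact IsCoboundedUnder.of_frequently_le hn

lemma map_essInf_of_monotone_of_continuousAt {Ω R S : Type*} [MeasurableSpace Ω] {μ : Measure Ω}
    [NeZero μ] [ConditionallyCompleteLinearOrder R] [TopologicalSpace R] [OrderTopology R]
    [(atTop : Filter R).IsCountablyGenerated]
    [ConditionallyCompleteLinearOrder S] [TopologicalSpace S] [OrderTopology S]
    {f : Ω → R} {g : R → S} (hg : Monotone g) (hgc : ContinuousAt g (essInf f μ))
    (hf : IsBoundedUnder (· ≥ ·) (ae μ) f) :
    g (essInf f μ) = essInf (fun ω ↦ g (f ω)) μ :=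
  hg.map_liminf_of_continuousAt f hgc (isCoboundedUnder_ge_of_countableInterFilter _ f) hf

section

variable {Ω : Type*} [MeasurableSpace Ω] {μ : Measure Ω} {X Y : Ω → ℝ}

lemma memLp_two_sqrt_of_integrable (hX : Integrable X μ) : MemLp (fun ω ↦ √(X ω)) 2 μ := by
  rw [memLp_two_iff_integrable_sq hX.aemeasurable.sqrt.aestronglyMeasurable]
  simpa only [sq_sqrt'] using hX.pos_part

variable [IsProbabilityMeasure μ]

lemma integral_sub_const_sq_eq_variance_add (hY : MemLp Y 2 μ) (c : ℝ) :
    ∫ ω, (Y ω - c) ^ 2 ∂μ = Var[Y; μ] + (μ[Y] - c) ^ 2 := by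
  have hmean : ∫ ω, (Y ω - c) ∂μ = μ[Y] - c := by
    simp [integral_sub (hY.integrable one_le_two) (integrable_const c)]
  have hvar : Var[Y; μ] = ∫ ω, (Y ω - c) ^ 2 ∂μ - (μ[Y] - c) ^ 2 := by
    rw [← variance_sub_const hY.aestronglyMeasurable c, ← hmean]
    exact variance_eq_sub (hY.sub (memLp_const c))
  rw [hvar, sub_add_cancel]

lemma integral_eq_essInf_iff_ae_eq (hY : Integrable Y μ)
    (hbdd : IsBoundedUnder (· ≥ ·) (ae μ) Y) :
    μ[Y] = essInf Y μ ↔ Y =ᵐ[μ] fun _ ↦ essInf Y μ := by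
  simpa [eq_comm, EventuallyEq] using
    integral_eq_iff_of_ae_le (integrable_const (essInf Y μ)) hY (ae_essInf_le hbdd)

lemma integral_eq_essInf_of_variance_eq_zero (hY : MemLp Y 2 μ) (hvar : Var[Y; μ] = 0) :
    μ[Y] = essInf Y μ := by
  rw [essInf_congr_ae (ae_eq_integral_of_variance_eq_zero hY hvar), essInf_const']

lemma variance_eq_zero_of_integral_eq_essInf (hY : Integrable Y μ)
    (hbdd : IsBoundedUnder (· ≥ ·) (ae μ) Y) (hmean : μ[Y] = essInf Y μ) :
    Var[Y; μ] = 0 := by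
  have hconst : Y =ᵐ[μ] fun _ ↦ essInf Y μ := (integral_eq_essInf_iff_ae_eq hY hbdd).1 hmean
  rw [variance_congr hconst, ← covariance_self aemeasurable_const, covariance_const_left]

lemma integral_sub_essInf_sq_eq_zero_of_variance_eq_zero (hY : MemLp Y 2 μ)
    (hvar : Var[Y; μ] = 0) : ∫ ω, (Y ω - essInf Y μ) ^ 2 ∂μ = 0 := by
  have hmean : μ[Y] = essInf Y μ := integral_eq_essInf_of_variance_eq_zero hY hvar
  rw [integral_sub_const_sq_eq_variance_add hY, hvar, hmean, sub_self, zero_pow two_ne_zero,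
    add_zero]

lemma variance_lt_integral_sub_essInf_sq (hY : MemLp Y 2 μ)
    (hbdd : IsBoundedUnder (· ≥ ·) (ae μ) Y) (hvar : Var[Y; μ] ≠ 0) :
    Var[Y; μ] < ∫ ω, (Y ω - essInf Y μ) ^ 2 ∂μ := by
  have hmean : μ[Y] ≠ essInf Y μ :=
    mt (variance_eq_zero_of_integral_eq_essInf (hY.integrable one_le_two) hbdd) hvar
  rw [integral_sub_const_sq_eq_variance_add hY]
  exact lt_add_of_pos_right _ (sq_pos_of_ne_zero (sub_ne_zero.2 hmean))

end

/-- Necessity part of Proposition 1 for `(V_X, E_X)`: with `V_X = Var √X` and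
`E_X = E (√X - √m_X)²`, `m_X = essInf X`, either `E_X = V_X = 0` or `E_X > V_X > 0`. -/
theorem admissible_V_E {Ω : Type*} [MeasurableSpace Ω] {μ : Measure Ω}
    [IsProbabilityMeasure μ] (X : Ω → ℝ) (hXm : Measurable X)
    (hXnn : ∀ᵐ ω ∂μ, 0 ≤ X ω) (hXint : Integrable X μ)
    (V E : ℝ) (hVdef : V = variance (fun ω => Real.sqrt (X ω)) μ)
    (hEdef : E = ∫ ω, (Real.sqrt (X ω) - Real.sqrt (essInf X μ)) ^ 2 ∂μ) :
    (E = 0 ∧ V = 0) ∨ (E > V ∧ V > 0) := by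
  have hsqrt : √(essInf X μ) = essInf (fun ω ↦ √(X ω)) μ :=
    map_essInf_of_monotone_of_continuousAt (fun _ _ ↦ Real.sqrt_le_sqrt)
      continuous_sqrt.continuousAt (isBoundedUnder_of_eventually_ge hXnn)
  have hL2 : MemLp (fun ω ↦ √(X ω)) 2 μ := memLp_two_sqrt_of_integrable hXint
  have hbdd : IsBoundedUnder (· ≥ ·) (ae μ) fun ω ↦ √(X ω) :=
    isBoundedUnder_of ⟨0, fun ω ↦ sqrt_nonneg (X ω)⟩
  rw [hsqrt] at hEdef
  subst hVdef hEdef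
  rcases eq_or_ne Var[fun ω ↦ √(X ω); μ] 0 with hvar | hvar
  · exact .inl ⟨integral_sub_essInf_sq_eq_zero_of_variance_eq_zero hL2 hvar, hvar⟩
  · exact .inr ⟨variance_lt_integral_sub_essInf_sq hL2 hbdd hvar,
      (variance_nonneg _ μ).lt_of_ne' hvar⟩
end

section
/- For any real numbers V and F with F > V > 0, there exists a nonnegative bounded random variable X (which may be taken to assume at most two values) such that Var(√X) = V and E[(√M_X − √X)²] = F, where M_X := essSup X. In fact one may take X = Y², where Y takes value u with probability p and value v with probability q = 1 − p, with q = V/F, u ≥ 0 arbitrary, and v − u = F/√(F − V). -/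
open MeasureTheory ProbabilityTheory Real

/-!
If `√X` takes its larger value with probability `q ∈ (0, 1]` and its two values differ by `d`, then
`E (√(essSup X) - √X)² = (1 - q) d²` and `Var √X = q (1 - q) d²`. The ratio of the two is `q`, which
forces `q = V / F`, and then `(1 - q) d² = F` gives `d = F / √(F - V)`.
-/

open scoped unitInterval

section Bernoulli

variable {Ω : Type*} [MeasurableSpace Ω] [MeasurableSingletonClass Ω] {x y : Ω} {p : I}

lemma ae_bernoulliMeasure_iff {P : Ω → Prop} :
    (∀ᵐ z ∂Ber(x, y, p), P z) ↔ (p ≠ 0 → P x) ∧ (p ≠ 1 → P y) := by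
  obtain rfl | h₀ := eq_or_ne p 0
  · simp
  obtain rfl | h₁ := eq_or_ne p 1
  · simp
  have toNNReal_ne_zero (r : I) (hr : r ≠ 0) : unitInterval.toNNReal r ≠ 0 := by
    simpa [← NNReal.coe_eq_zero] using hr
  rw [bernoulliMeasure_def, ae_add_measure_iff,
    Measure.ae_smul_measure_eq (toNNReal_ne_zero p h₀),
    Measure.ae_smul_measure_eq (toNNReal_ne_zero (σ p) (by simpa using h₁))]
  simp [h₀, h₁]

lemma essSup_bernoulliMeasure {β : Type*} [ConditionallyCompleteLattice β] {f : Ω → β}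
    (hp : p ≠ 0) (hf : f y ≤ f x) : essSup f Ber(x, y, p) = f x := by
  have upper_bounds : {a | ∀ᵐ z ∂Ber(x, y, p), f z ≤ a} = Set.Ici (f x) := by
    ext a
    rw [Set.mem_ofPred_eq, ae_bernoulliMeasure_iff]
    exact ⟨fun h ↦ h.1 hp, fun h ↦ ⟨fun _ ↦ h, fun _ ↦ hf.trans h⟩⟩
  rw [essSup, Filter.limsup_eq, upper_bounds, csInf_Ici]

lemma variance_bernoulliMeasure (f : Ω → ℝ) :
    Var[f; Ber(x, y, p)] = p * ((1 - p) * (f x - f y) ^ 2) := by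
  have hf : AEMeasurable f Ber(x, y, p) :=
    (integrable_bernoulliMeasure x y p f).aemeasurable
  simp only [variance_eq_integral hf, integral_bernoulliMeasure, smul_eq_mul]
  ring

lemma integral_sqrt_essSup_sub_sqrt_sq_bernoulliMeasure {X : Ω → ℝ} (hp : p ≠ 0)
    (hX : X y ≤ X x) :
    ∫ z, (√(essSup X Ber(x, y, p)) - √(X z)) ^ 2 ∂Ber(x, y, p) =
      (1 - p) * (√(X x) - √(X y)) ^ 2 := by
  simp [essSup_bernoulliMeasure hp hX, integral_bernoulliMeasure]

end Bernoulli

lemma one_sub_div_mul_div_sqrt_sub_sq {V F : ℝ} (hF : F ≠ 0) (hVF : V < F) :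
    (1 - V / F) * (F / √(F - V)) ^ 2 = F := by
  have hFV : F - V ≠ 0 := (sub_pos.2 hVF).ne'
  rw [div_pow, sq_sqrt (sub_pos.2 hVF).le]
  field_simp

/-- Sufficiency part of Proposition 1 for `(V, F)` with `F > V > 0`: for any `u ≥ 0`
there is a nonnegative bounded random variable `X` taking at most two values (namely
`X = Y²` with `Y = Y_{u,v,p}`, `v = u + F/√(F-V)`, `q = 1 - p = V/F`) such that
`Var √X = V` and `E (√(essSup X) - √X)² = F`. -/
theorem exists_rv_with_V_F (V F : ℝ) (hV : 0 < V) (hVF : V < F) (u : ℝ) (hu : 0 ≤ u) :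
    ∃ (Ω : Type) (_ : MeasurableSpace Ω) (μ : Measure Ω) (_ : IsProbabilityMeasure μ)
      (X : Ω → ℝ), Measurable X ∧ (∀ ω, 0 ≤ X ω) ∧
      (∀ ω, X ω = u ^ 2 ∨ X ω = (u + F / Real.sqrt (F - V)) ^ 2) ∧
      μ {ω | X ω = (u + F / Real.sqrt (F - V)) ^ 2} = ENNReal.ofReal (V / F) ∧
      variance (fun ω => Real.sqrt (X ω)) μ = V ∧
      (∫ ω, (Real.sqrt (essSup X μ) - Real.sqrt (X ω)) ^ 2 ∂μ) = F := by
  have hF : 0 < F := hV.trans hVF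
  set d := F / √(F - V)
  have hd : 0 < d := div_pos hF (sqrt_pos.2 (sub_pos.2 hVF))
  have hlt : u ^ 2 < (u + d) ^ 2 := by gcongr; linarith
  let q : I := ⟨V / F, unitInterval.div_mem hV.le hF.le hVF.le⟩
  have hq : q ≠ 0 := Subtype.coe_ne_coe.1 (div_pos hV hF).ne'
  let X : Bool → ℝ := fun b ↦ bif b then (u + d) ^ 2 else u ^ 2
  have gap : √(X true) - √(X false) = d := by
    simp [X, sqrt_sq hu, sqrt_sq (add_nonneg hu hd.le)]
  have gap_sq : (1 - V / F) * d ^ 2 = F := one_sub_div_mul_div_sqrt_sub_sq hF.ne' hVF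
  refine ⟨Bool, inferInstance, Ber(true, false, q), inferInstance, X, measurable_of_finite X,
    Bool.forall_bool.2 ⟨sq_nonneg u, sq_nonneg (u + d)⟩,
    Bool.forall_bool.2 ⟨.inl rfl, .inr rfl⟩, ?_, ?_, ?_⟩
  · have top_value : {b | X b = (u + d) ^ 2} = {true} := by ext b; cases b <;> simp [X, hlt.ne]
    rw [top_value, bernoulliMeasure_apply_of_mem_of_notMem q (.singleton _) rfl Bool.false_ne_true,
      ENNReal.ofReal_eq_coe_nnreal q.2.1]
    rfl
  · rw [variance_bernoulliMeasure, gap, gap_sq, div_mul_cancel₀ V hF.ne']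
  · rw [integral_sqrt_essSup_sub_sqrt_sq_bernoulliMeasure hq hlt.le, gap, gap_sq]
end
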